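/- There exists a symmetric bilinear map (·,·)* : Dom(ρ) × Dom(ρ) → ℝ such that (J,J)* = Q*(J) ≥ 0 for every J ∈ Dom(ρ), and ⟨J₁, E⟩ = (J₁, J₂)* for all J₁, J₂ ∈ Dom(ρ) and every E ∈ ρ(J₂). It is given by the polarization formula (J₁,J₂)* = ¼ (Q*(J₁+J₂) − Q*(J₁−J₂)). -/

import Mathlib

open MeasureTheory

/-- `S₀`: the closed subspace of real Schwartz functions with zero mean
(the AC-condition `∫ E = 0`). -/
noncomputable def S0 : Submodule ℝ (SchwartzMap ℝ ℝ) where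
  carrier := {E | ∫ s, E s = 0}
  zero_mem' := by simp
  add_mem' := by
    intro f g hf hg
    simp only [Set.mem_setOf_eq] at *
    have h : ∀ s : ℝ, (↑(f + g) : ℝ → ℝ) s = f s + g s := fun s => rfl
    rw [show (↑(f + g) : ℝ → ℝ) = fun s => f s + g s from funext h,
      integral_add f.integrable g.integrable, hf, hg, add_zero]
  smul_mem' := by
    intro c f hf
    simp only [Set.mem_setOf_eq] at *
    have h : (↑(c • f) : ℝ → ℝ) = fun s => c • f s := rfl
    rw [h, integral_smul, hf, smul_zero]

/-- `S₀*`: the topological dual of `S₀` (continuous real-linear functionals). -/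
abbrev S0d := ↥S0 →L[ℝ] ℝ

/-- Fourier transform `Ê(ν) = ∫ e^{−iνs} E(s) ds` of a Schwartz function. -/
noncomputable def fhat (E : SchwartzMap ℝ ℝ) (ν : ℝ) : ℂ :=
  ∫ s : ℝ, Complex.exp (-(Complex.I * ν * s)) * (E s : ℂ)

/-- `B(E,E′) := ½ ∫ Re(Ê(ν)·conj(Ê′(ν))) m(dν)`. -/
noncomputable def Bform (m : Measure ℝ) (E E' : SchwartzMap ℝ ℝ) : ℝ :=
  (1/2) * ∫ ν, (fhat E ν * (starRingEnd ℂ) (fhat E' ν)).re ∂m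

/-- `Q(E) := B(E,E) = ½ ∫ |Ê(ν)|² m(dν)`. -/
noncomputable def Qform (m : Measure ℝ) (E : ↥S0) : ℝ := Bform m E E

/-- The subdifferential `∂Q(E) ⊆ S₀*`. -/
def subQ (m : Measure ℝ) (E : ↥S0) : Set S0d :=
  {J | ∀ E' : ↥S0, Qform m E' ≥ Qform m E + J (E' - E)}

/-- The Legendre–Fenchel transform `Q*(J) := sup_{E∈S₀} (2⟨J,E⟩ − Q(E))`, with values
in `[−∞,∞]` (in fact in `[0,∞]`). -/
noncomputable def Qstar (m : Measure ℝ) (J : S0d) : EReal :=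
  ⨆ E : ↥S0, ((2 * J E - Qform m E : ℝ) : EReal)

/-- The subdifferential `∂Q*(J) ⊆ S₀`, with inequalities read in `[−∞,∞]`. -/
def subQstar (m : Measure ℝ) (J : S0d) : Set ↥S0 :=
  {E | ∀ J' : S0d, Qstar m J' ≥ Qstar m J + ((J' E - J E : ℝ) : EReal)}

/-- The AC-conductivity `σ(E) := ½ ∂Q(E)`. -/
def sigmaMap (m : Measure ℝ) (E : ↥S0) : Set S0d := {J | (2:ℝ) • J ∈ subQ m E}

/-- The AC-resistivity `ρ(J) := ½ ∂Q*(J)`. -/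
def rhoMap (m : Measure ℝ) (J : S0d) : Set ↥S0 := {E | (2:ℝ) • E ∈ subQstar m J}

/-- `Dom(ρ) := {J ∈ S₀* : ∂Q*(J) ≠ ∅}`. -/
def DomRho (m : Measure ℝ) : Set S0d := {J | (subQstar m J).Nonempty}

lemma fhat_integrable (E : SchwartzMap ℝ ℝ) (ν : ℝ) :
    Integrable (fun s : ℝ => Complex.exp (-(Complex.I * ν * s)) * (E s : ℂ)) := by
  have h : Integrable (fun s : ℝ => (E s : ℂ)) := E.integrable.ofReal
  refine h.mono ?_ ?_
  · apply Continuous.aestronglyMeasurable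
    have := E.continuous
    fun_prop
  · refine Filter.Eventually.of_forall fun s => ?_
    rw [norm_mul, Complex.norm_exp]
    simp

lemma fhat_norm_le (E : SchwartzMap ℝ ℝ) (ν : ℝ) : ‖fhat E ν‖ ≤ ∫ s, ‖E s‖ := by
  unfold fhat
  refine (norm_integral_le_integral_norm _).trans (le_of_eq ?_)
  refine integral_congr_ae (Filter.Eventually.of_forall fun s => ?_)
  simp only
  rw [norm_mul, Complex.norm_exp]
  simp

lemma fhat_continuous (E : SchwartzMap ℝ ℝ) : Continuous (fhat E) := by
  unfold fhat
  refine continuous_of_dominated (bound := fun s => ‖E s‖) ?_ ?_ E.integrable.norm ?_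
  · intro ν
    exact (fhat_integrable E ν).aestronglyMeasurable
  · intro ν
    refine Filter.Eventually.of_forall fun s => ?_
    rw [norm_mul, Complex.norm_exp]
    simp
  · refine Filter.Eventually.of_forall fun s => ?_
    fun_prop

lemma fhat_add (E F : SchwartzMap ℝ ℝ) (ν : ℝ) : fhat (E + F) ν = fhat E ν + fhat F ν := by
  unfold fhat
  rw [← integral_add (fhat_integrable E ν) (fhat_integrable F ν)]
  congr 1
  ext s
  rw [SchwartzMap.add_apply]
  push_cast
  ring

lemma fhat_smul (c : ℝ) (E : SchwartzMap ℝ ℝ) (ν : ℝ) : fhat (c • E) ν = c * fhat E ν := by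
  unfold fhat
  rw [← integral_const_mul]
  congr 1
  ext s
  rw [SchwartzMap.smul_apply, smul_eq_mul]
  push_cast
  ring

lemma B_integrable (m : Measure ℝ) [IsFiniteMeasure m] (E F : SchwartzMap ℝ ℝ) :
    Integrable (fun ν => (fhat E ν * (starRingEnd ℂ) (fhat F ν)).re) m := by
  refine Integrable.of_bound (C := (∫ s, ‖E s‖) * ∫ s, ‖F s‖) ?_ ?_
  · apply Continuous.aestronglyMeasurable
    have h1 := fhat_continuous E
    have h2 := fhat_continuous F
    fun_prop
  · refine Filter.Eventually.of_forall fun ν => ?_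
    refine (Complex.abs_re_le_norm _).trans ?_
    rw [norm_mul, RCLike.norm_conj]
    exact mul_le_mul (fhat_norm_le E ν) (fhat_norm_le F ν) (norm_nonneg _)
      ((norm_nonneg _).trans (fhat_norm_le E ν))

lemma B_symm (m : Measure ℝ) (E F : SchwartzMap ℝ ℝ) : Bform m E F = Bform m F E := by
  unfold Bform
  congr 2
  ext ν
  simp only [Complex.mul_re, Complex.conj_re, Complex.conj_im]
  ring

lemma B_add (m : Measure ℝ) [IsFiniteMeasure m] (E F G : SchwartzMap ℝ ℝ) :
    Bform m E (F + G) = Bform m E F + Bform m E G := by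
  unfold Bform
  rw [← mul_add, ← integral_add (B_integrable m E F) (B_integrable m E G)]
  congr 2
  ext ν
  rw [fhat_add]
  simp only [Complex.mul_re, Complex.conj_re, Complex.conj_im, map_add, Complex.add_re,
    Complex.add_im]
  ring

lemma B_smul (m : Measure ℝ) (c : ℝ) (E F : SchwartzMap ℝ ℝ) :
    Bform m E (c • F) = c * Bform m E F := by
  unfold Bform
  rw [mul_left_comm, ← integral_const_mul c]
  congr 2
  ext ν
  rw [fhat_smul]
  simp [Complex.mul_re]
  ring

lemma B_nonneg (m : Measure ℝ) (E : SchwartzMap ℝ ℝ) : 0 ≤ Bform m E E := by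
  unfold Bform
  refine mul_nonneg (by norm_num) (integral_nonneg fun ν => ?_)
  simp only [Complex.mul_re, Complex.conj_re, Complex.conj_im, Pi.zero_apply]
  nlinarith [mul_self_nonneg (fhat E ν).re, mul_self_nonneg (fhat E ν).im]

lemma B_bound (m : Measure ℝ) [IsFiniteMeasure m] (E F : SchwartzMap ℝ ℝ) :
    ‖Bform m E F‖ ≤ (1 / 2 * ((∫ s, ‖E s‖) * m.real Set.univ)) * ∫ s, ‖F s‖ := by
  unfold Bform
  rw [norm_mul]
  have := norm_integral_le_of_norm_le_const (μ := m) (C := (∫ s, ‖E s‖) * ∫ s, ‖F s‖)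
    (f := fun ν => (fhat E ν * (starRingEnd ℂ) (fhat F ν)).re)
    (Filter.Eventually.of_forall fun ν => by
      refine (Complex.abs_re_le_norm _).trans ?_
      rw [norm_mul, RCLike.norm_conj]
      exact mul_le_mul (fhat_norm_le E ν) (fhat_norm_le F ν) (norm_nonneg _)
        ((norm_nonneg _).trans (fhat_norm_le E ν)))
  have h2 : ‖(1 / 2 : ℝ)‖ = 1 / 2 := by norm_num
  rw [h2]
  linarith

/-- the functional `B(E,·)` as a linear map on Schwartz space -/
noncomputable def Blin (m : Measure ℝ) [IsFiniteMeasure m] (E : SchwartzMap ℝ ℝ) :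
    SchwartzMap ℝ ℝ →ₗ[ℝ] ℝ where
  toFun F := Bform m E F
  map_add' F G := B_add m E F G
  map_smul' c F := B_smul m c E F

lemma Blin_cont (m : Measure ℝ) [IsFiniteMeasure m] (E : SchwartzMap ℝ ℝ) :
    Continuous (Blin m E) := by
  refine continuous_of_continuousAt_zero (Blin m E) ?_
  unfold ContinuousAt
  rw [map_zero]
  have hc : Continuous (fun F : SchwartzMap ℝ ℝ =>
      (1 / 2 * ((∫ s, ‖E s‖) * m.real Set.univ)) *
        ‖SchwartzMap.toLpCLM ℝ ℝ 1 (volume : Measure ℝ) F‖) := by fun_prop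
  have h0 := hc.tendsto 0
  rw [map_zero, norm_zero, mul_zero] at h0
  refine squeeze_zero_norm (fun F => ?_) h0
  refine (B_bound m E F).trans (le_of_eq ?_)
  congr 1
  rw [L1.norm_eq_integral_norm]
  refine integral_congr_ae ?_
  filter_upwards [SchwartzMap.coeFn_toLp F 1 (volume : Measure ℝ)] with s hs
  rw [SchwartzMap.toLpCLM_apply, hs]

/-- the functional `B(E,·)` in the dual of `S₀` -/
noncomputable def BJ (m : Measure ℝ) [IsFiniteMeasure m] (E : ↥S0) : S0d where
  toLinearMap := (Blin m E).comp S0.subtype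
  cont := (Blin_cont m E).comp continuous_subtype_val

lemma BJ_apply (m : Measure ℝ) [IsFiniteMeasure m] (E F : ↥S0) :
    BJ m E F = Bform m E F := rfl

lemma B_add_left (m : Measure ℝ) [IsFiniteMeasure m] (E F G : SchwartzMap ℝ ℝ) :
    Bform m (E + F) G = Bform m E G + Bform m F G := by
  rw [B_symm, B_add, B_symm m G E, B_symm m G F]

lemma B_smul_left (m : Measure ℝ) (c : ℝ) (E F : SchwartzMap ℝ ℝ) :
    Bform m (c • E) F = c * Bform m E F := by
  rw [B_symm, B_smul, B_symm]

lemma Q_comb (m : Measure ℝ) [IsFiniteMeasure m] (E F : ↥S0) (t : ℝ) :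
    Qform m (E + t • F) = Qform m E + 2 * t * Bform m E F + t ^ 2 * Qform m F := by
  unfold Qform
  have : ((E + t • F : ↥S0) : SchwartzMap ℝ ℝ) = (E : SchwartzMap ℝ ℝ) + t • (F : SchwartzMap ℝ ℝ) := rfl
  rw [this, B_add_left, B_add, B_add, B_smul_left, B_smul, B_smul_left, B_smul, B_symm m F E]
  ring

lemma Qstar_ge (m : Measure ℝ) (J : S0d) (E : ↥S0) :
    ((2 * J E - Qform m E : ℝ) : EReal) ≤ Qstar m J :=
  le_iSup (fun E : ↥S0 => ((2 * J E - Qform m E : ℝ) : EReal)) E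

lemma Q_zero (m : Measure ℝ) : Qform m 0 = 0 := by
  have := B_smul m 0 0 0
  unfold Qform
  simpa using this

lemma Qstar_nonneg (m : Measure ℝ) (J : S0d) : 0 ≤ Qstar m J := by
  have := Qstar_ge m J 0
  simpa [Q_zero] using this

lemma Qstar_zero (m : Measure ℝ) : Qstar m 0 = 0 := by
  refine le_antisymm (iSup_le fun E => ?_) (Qstar_nonneg m 0)
  have : 0 ≤ Qform m E := B_nonneg m E
  have h : (2 * (0 : S0d) E - Qform m E) ≤ 0 := by simpa using this
  exact_mod_cast h

lemma Qstar_rep (m : Measure ℝ) [IsFiniteMeasure m] (J : S0d) (E : ↥S0)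
    (h : ∀ F : ↥S0, J F = Bform m E F) : Qstar m J = ((Qform m E : ℝ) : EReal) := by
  refine le_antisymm (iSup_le fun F => ?_) ?_
  · rw [h, EReal.coe_le_coe_iff]
    have h1 : 0 ≤ Qform m (E + (-1 : ℝ) • F) := B_nonneg m _
    rw [Q_comb] at h1
    linarith
  · have := Qstar_ge m J E
    rw [h] at this
    refine le_trans (le_of_eq ?_) this
    congr 1
    unfold Qform
    ring

lemma quad_zero (a b : ℝ) (h : ∀ t : ℝ, t * a - t ^ 2 * b ≤ 0) : a = 0 := by
  by_contra ha
  have hb : 0 < |b| + 1 := by positivity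
  have h1 := h (a / (|b| + 1))
  have h2 : a / (|b| + 1) * a - (a / (|b| + 1)) ^ 2 * b
      = a ^ 2 * (|b| + 1 - b) / (|b| + 1) ^ 2 := by
    field_simp
  rw [h2] at h1
  have h3 : 0 < |b| + 1 - b := by linarith [le_abs_self b]
  have : 0 < a ^ 2 * (|b| + 1 - b) / (|b| + 1) ^ 2 := by positivity
  linarith

lemma rho_rep (m : Measure ℝ) [IsFiniteMeasure m] (J : S0d) (E : ↥S0) (hE : E ∈ rhoMap m J) :
    ∀ F : ↥S0, J F = Bform m E F := by
  have hE' : ∀ J' : S0d, Qstar m J + ((J' ((2:ℝ) • E) - J ((2:ℝ) • E) : ℝ) : EReal) ≤ Qstar m J' :=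
    hE
  have hnt : Qstar m J ≠ ⊤ := by
    intro h
    have := hE' 0
    rw [h, Qstar_zero, EReal.top_add_coe] at this
    simp at this
  have hnb : Qstar m J ≠ ⊥ := by
    intro h
    have := Qstar_nonneg m J
    rw [h] at this
    simp at this
  obtain ⟨q, hq⟩ : ∃ q : ℝ, Qstar m J = (q : EReal) :=
    ⟨(Qstar m J).toReal, (EReal.coe_toReal hnt hnb).symm⟩
  have hub : ∀ F : ↥S0, 2 * J F - Qform m F ≤ q := fun F => by
    have := Qstar_ge m J F
    rw [hq] at this
    exact_mod_cast this
  -- scaling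
  have hscale : ∀ t : ℝ, q + 2 * (t - 1) * J E ≤ t ^ 2 * q := by
    intro t
    have h1 := hE' (t • J)
    have h2 : Qstar m (t • J) ≤ ((t ^ 2 * q : ℝ) : EReal) := by
      refine iSup_le fun F => ?_
      rw [EReal.coe_le_coe_iff]
      by_cases ht : t = 0
      · have : 0 ≤ Qform m F := B_nonneg m F
        subst ht
        simpa using this
      · have h3 := hub (t⁻¹ • F)
        have h4 : Qform m (t⁻¹ • F) = t⁻¹ ^ 2 * Qform m F := by
          have := Q_comb m 0 F t⁻¹
          have h5 : Bform m (0 : SchwartzMap ℝ ℝ) F = 0 := by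
            simpa using B_smul_left m 0 0 (F : SchwartzMap ℝ ℝ)
          simpa [Q_zero, h5] using this
        rw [h4, map_smul, smul_eq_mul] at h3
        have h6 := mul_le_mul_of_nonneg_left h3 (sq_nonneg t)
        have h7 : t ^ 2 * (2 * (t⁻¹ * J F) - t⁻¹ ^ 2 * Qform m F) = 2 * (t * J F) - Qform m F := by
          field_simp
        rw [h7] at h6
        exact h6
    have h8 := h1.trans h2
    rw [hq, ← EReal.coe_add, EReal.coe_le_coe_iff] at h8
    simp only [map_smul, ContinuousLinearMap.smul_apply, smul_eq_mul] at h8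
    linarith
  have hJE : J E = q := by
    have := quad_zero (2 * (J E - q)) q (fun t => by
      have := hscale (1 + t)
      nlinarith)
    linarith
  have hQq : Qform m E ≤ q := by
    have h1 := hE' (BJ m E)
    rw [Qstar_rep m (BJ m E) E (fun F => rfl), hq, ← EReal.coe_add, EReal.coe_le_coe_iff] at h1
    simp only [map_smul, smul_eq_mul, BJ_apply] at h1
    have : Bform m E E = Qform m E := rfl
    linarith
  intro F
  have := quad_zero (2 * (J F - Bform m E F)) (Qform m F) (fun t => by
    have h1 := hub (E + t • F)
    rw [Q_comb, map_add, map_smul, smul_eq_mul] at h1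
    nlinarith)
  linarith

lemma dom_rep (m : Measure ℝ) [IsFiniteMeasure m] (J : S0d) (hJ : J ∈ DomRho m) :
    ∃ E : ↥S0, ∀ F : ↥S0, J F = Bform m E F := by
  obtain ⟨E, hE⟩ := hJ
  refine ⟨(1 / 2 : ℝ) • E, rho_rep m J _ ?_⟩
  have : (2 : ℝ) • (1 / 2 : ℝ) • E = E := by
    rw [smul_smul]
    norm_num
  unfold rhoMap
  rw [Set.mem_setOf_eq, this]
  exact hE

/-- the polarization of `Q*` -/
noncomputable def fpol (m : Measure ℝ) (J₁ J₂ : S0d) : ℝ :=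
  1 / 4 * ((Qstar m (J₁ + J₂)).toReal - (Qstar m (J₁ - J₂)).toReal)

lemma Qstar_comb (m : Measure ℝ) [IsFiniteMeasure m] (J₁ J₂ : S0d) (E₁ E₂ : ↥S0)
    (h₁ : ∀ F : ↥S0, J₁ F = Bform m E₁ F) (h₂ : ∀ F : ↥S0, J₂ F = Bform m E₂ F) (t : ℝ) :
    Qstar m (J₁ + t • J₂) = ((Qform m (E₁ + t • E₂) : ℝ) : EReal) := by
  refine Qstar_rep m _ _ fun F => ?_
  have : ((E₁ + t • E₂ : ↥S0) : SchwartzMap ℝ ℝ)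
    = (E₁ : SchwartzMap ℝ ℝ) + t • (E₂ : SchwartzMap ℝ ℝ) := rfl
  rw [this, B_add_left, B_smul_left, ← h₁, ← h₂]
  rfl

lemma fpol_rep (m : Measure ℝ) [IsFiniteMeasure m] (J₁ J₂ : S0d) (E₁ E₂ : ↥S0)
    (h₁ : ∀ F : ↥S0, J₁ F = Bform m E₁ F) (h₂ : ∀ F : ↥S0, J₂ F = Bform m E₂ F) :
    fpol m J₁ J₂ = Bform m E₁ E₂ ∧ ((fpol m J₁ J₂ : ℝ) : EReal)
          = (((1:ℝ)/4 : ℝ) : EReal) * (Qstar m (J₁ + J₂) - Qstar m (J₁ - J₂)) := by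
  have hp := Qstar_comb m J₁ J₂ E₁ E₂ h₁ h₂ 1
  have hm := Qstar_comb m J₁ J₂ E₁ E₂ h₁ h₂ (-1)
  rw [Q_comb] at hp hm
  rw [one_smul] at hp
  have hs : J₁ + (-1 : ℝ) • J₂ = J₁ - J₂ := by
    ext F
    simp [sub_eq_add_neg]
  rw [hs] at hm
  unfold fpol
  rw [hp, hm]
  constructor
  · rw [EReal.toReal_coe, EReal.toReal_coe]
    ring
  · rw [EReal.toReal_coe, EReal.toReal_coe, EReal.coe_mul, EReal.coe_sub]

/-- There exists a symmetric bilinear map `(·,·)*` on `Dom(ρ) × Dom(ρ)` with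
`(J,J)* = Q*(J) ≥ 0` for every `J ∈ Dom(ρ)`, and `⟨J₁,E⟩ = (J₁,J₂)*` for all
`J₁, J₂ ∈ Dom(ρ)` and every `E ∈ ρ(J₂)`; it is given by the polarization formula
`(J₁,J₂)* = ¼ (Q*(J₁+J₂) − Q*(J₁−J₂))`. -/
theorem statement10 (m : Measure ℝ) [IsFiniteMeasure m] :
    ∃ f : S0d → S0d → ℝ,
      (∀ J₁ ∈ DomRho m, ∀ J₂ ∈ DomRho m, f J₁ J₂ = f J₂ J₁) ∧
      (∀ J₁ ∈ DomRho m, ∀ J₂ ∈ DomRho m, ∀ J₃ ∈ DomRho m,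
        f (J₁ + J₂) J₃ = f J₁ J₃ + f J₂ J₃) ∧
      (∀ c : ℝ, ∀ J₁ ∈ DomRho m, ∀ J₂ ∈ DomRho m, f (c • J₁) J₂ = c * f J₁ J₂) ∧
      (∀ J ∈ DomRho m, 0 ≤ f J J ∧ ((f J J : ℝ) : EReal) = Qstar m J) ∧
      (∀ J₁ ∈ DomRho m, ∀ J₂ ∈ DomRho m, ∀ E ∈ rhoMap m J₂, J₁ E = f J₁ J₂) ∧
      (∀ J₁ ∈ DomRho m, ∀ J₂ ∈ DomRho m,
        ((f J₁ J₂ : ℝ) : EReal)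
          = (((1:ℝ)/4 : ℝ) : EReal) * (Qstar m (J₁ + J₂) - Qstar m (J₁ - J₂))) := by
  refine ⟨fpol m, ?_, ?_, ?_, ?_, ?_, ?_⟩
  · intro J₁ hJ₁ J₂ hJ₂
    obtain ⟨E₁, h₁⟩ := dom_rep m J₁ hJ₁
    obtain ⟨E₂, h₂⟩ := dom_rep m J₂ hJ₂
    rw [(fpol_rep m J₁ J₂ E₁ E₂ h₁ h₂).1, (fpol_rep m J₂ J₁ E₂ E₁ h₂ h₁).1, B_symm]
  · intro J₁ hJ₁ J₂ hJ₂ J₃ hJ₃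
    obtain ⟨E₁, h₁⟩ := dom_rep m J₁ hJ₁
    obtain ⟨E₂, h₂⟩ := dom_rep m J₂ hJ₂
    obtain ⟨E₃, h₃⟩ := dom_rep m J₃ hJ₃
    have h : ∀ F : ↥S0, (J₁ + J₂) F = Bform m ((E₁ + E₂ : ↥S0) : SchwartzMap ℝ ℝ) F := fun F => by
      rw [Submodule.coe_add, B_add_left, ← h₁, ← h₂]
      rfl
    rw [(fpol_rep m _ J₃ _ E₃ h h₃).1, (fpol_rep m J₁ J₃ E₁ E₃ h₁ h₃).1,
      (fpol_rep m J₂ J₃ E₂ E₃ h₂ h₃).1, Submodule.coe_add, B_add_left]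
  · intro c J₁ hJ₁ J₂ hJ₂
    obtain ⟨E₁, h₁⟩ := dom_rep m J₁ hJ₁
    obtain ⟨E₂, h₂⟩ := dom_rep m J₂ hJ₂
    have h : ∀ F : ↥S0, (c • J₁) F = Bform m ((c • E₁ : ↥S0) : SchwartzMap ℝ ℝ) F := fun F => by
      rw [Submodule.coe_smul, B_smul_left, ← h₁]
      rfl
    rw [(fpol_rep m _ J₂ _ E₂ h h₂).1, (fpol_rep m J₁ J₂ E₁ E₂ h₁ h₂).1,
      Submodule.coe_smul, B_smul_left]
  · intro J hJ
    obtain ⟨E, h⟩ := dom_rep m J hJ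
    rw [(fpol_rep m J J E E h h).1, Qstar_rep m J E h]
    exact ⟨B_nonneg m E, rfl⟩
  · intro J₁ hJ₁ J₂ hJ₂ E hE
    obtain ⟨E₁, h₁⟩ := dom_rep m J₁ hJ₁
    rw [(fpol_rep m J₁ J₂ E₁ E h₁ (rho_rep m J₂ E hE)).1, h₁]
  · intro J₁ hJ₁ J₂ hJ₂
    obtain ⟨E₁, h₁⟩ := dom_rep m J₁ hJ₁
    obtain ⟨E₂, h₂⟩ := dom_rep m J₂ hJ₂
    exact (fpol_rep m J₁ J₂ E₁ E₂ h₁ h₂).2
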